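/- arXiv:2010.03981 — 2 statements merged into one kernel-verified Lean document; each statement's English description precedes it below -/
import Mathlib

section
/- Let T = CP(n; n_1, …, n_k) ∈ C(n,k) be a caterpillar tree with respect to the path P_k = v_1⋯v_k, where 2 ≤ k ≤ n − 1. Then T ⪯ CP_{n;⌊(n−k)/2⌋,⌈(n−k)/2⌉}, and r(T) = r(CP_{n;⌊(n−k)/2⌋,⌈(n−k)/2⌉}) if and only if T is isomorphic to CP_{n;⌊(n−k)/2⌋,⌈(n−k)/2⌉}. -/
/-!
Put `n - k = a + b` with `a ≤ b ≤ a + 1`. A pendent edge has `μ = 1`, so only the `k - 1` spine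
edges matter. Along the spine, the number of vertices beyond an edge strictly decreases; these
numbers are therefore distinct, and `μ ≥ t` confines them to the interval `[t, n - t]`, so at most
`min (k - 1) (n + 1 - 2 * t)` spine edges have `μ ≥ t`. For the balanced double star path they are
consecutive integers centred about `n / 2` as nearly as parity permits, so the bound is attained
for every `t`.

If a caterpillar has the same edge division vector, it attains the bound as well. At `t = a + 1`
this says that the two extreme spine edges have `μ ≥ a + 1`, so both ends of the spine carry at
least `a` pendent vertices. The only way to fail to be a balanced double star path is then to have
exactly `a` pendent vertices at each end and a single one in between, with `b = a + 1`; but then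
neither extreme edge counts at `t = a + 2`, leaving at most `k - 3` edges where the bound is
`k - 2`.
-/

namespace TreeOrder

attribute [local instance] Classical.propDecidable

variable {V : Type*} {W : Type*}

/-- `side G u v` = number of vertices strictly closer to `u` than to `v`;
for an edge `uv` of a tree this is the order of the component of `T - uv` containing `u`. -/
noncomputable def side [Fintype V] (G : SimpleGraph V) (u v : V) : ℕ :=
  (Finset.univ.filter fun w => G.dist w u < G.dist w v).card

/-- `mu G u v = min (n_u(e), n_v(e))` for the edge `e = uv`. -/
noncomputable def mu [Fintype V] (G : SimpleGraph V) (u v : V) : ℕ :=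
  min (side G u v) (side G v u)

/-- `mu` as a function on unordered pairs. -/
noncomputable def muE [Fintype V] (G : SimpleGraph V) : Sym2 V → ℕ :=
  Sym2.lift ⟨fun u v => mu G u v, fun _ _ => min_comm _ _⟩

/-- `r G i` = number of edges `e` of `G` with `μ(e) = i`. -/
noncomputable def r [Fintype V] (G : SimpleGraph V) (i : ℕ) : ℕ :=
  (Finset.univ.filter fun e : Sym2 V => e ∈ G.edgeSet ∧ muE G e = i).card

/-- `tailSum G n k = Σ_{i=k}^{⌊n/2⌋} r_i(G)`. -/
noncomputable def tailSum [Fintype V] (G : SimpleGraph V) (n k : ℕ) : ℕ :=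
  ∑ i ∈ Finset.Icc k (n / 2), r G i

/-- The order `⪯` on trees with `n` vertices, via edge division vectors. -/
def Preceq [Fintype V] [Fintype W] (n : ℕ) (G : SimpleGraph V) (H : SimpleGraph W) : Prop :=
  ∀ k, 1 ≤ k → k ≤ n / 2 → tailSum G n k ≤ tailSum H n k

/-- The strict order `≺`. -/
def Prec [Fintype V] [Fintype W] (n : ℕ) (G : SimpleGraph V) (H : SimpleGraph W) : Prop :=
  Preceq n G H ∧ ∃ k, 1 ≤ k ∧ k ≤ n / 2 ∧ tailSum G n k < tailSum H n k

/-- Equality of edge division vectors `r(G) = r(H)`. -/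
def SameEdgeDivision [Fintype V] [Fintype W] (n : ℕ) (G : SimpleGraph V)
    (H : SimpleGraph W) : Prop :=
  ∀ i, 1 ≤ i → i ≤ n / 2 → r G i = r H i

/-- `u` is a centroidal vertex: `n_u(e) ≥ n/2` for every edge `e` incident to `u`. -/
def IsCentroidal [Fintype V] (G : SimpleGraph V) (u : V) : Prop :=
  ∀ v, G.Adj u v → Fintype.card V ≤ 2 * side G u v

/-- `u` is a proper centroidal vertex: `n_u(e) > ⌈n/2⌉` for every edge `e` incident to `u`. -/
def IsProperCentroidal [Fintype V] (G : SimpleGraph V) (u : V) : Prop :=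
  ∀ v, G.Adj u v → (Fintype.card V + 1) / 2 < side G u v

/-- The edge `uv` is a center edge: `μ(uv) = ⌊n/2⌋`. -/
def IsCenterEdge [Fintype V] (G : SimpleGraph V) (u v : V) : Prop :=
  G.Adj u v ∧ mu G u v = Fintype.card V / 2

/-- degree of a vertex -/
noncomputable def deg [Fintype V] (G : SimpleGraph V) (v : V) : ℕ :=
  (Finset.univ.filter fun w => G.Adj v w).card

/-- The path `P_n` on `n` vertices. -/
def pathG (n : ℕ) : SimpleGraph (Fin n) :=
  SimpleGraph.fromRel fun x y => (x : ℕ) + 1 = y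

/-- The star `S_n` on `n` vertices. -/
def starG (n : ℕ) : SimpleGraph (Fin n) :=
  SimpleGraph.fromRel fun x _ => (x : ℕ) = 0

/-- The double star path `CP_{n;a,b}` : a path on `n - a - b` vertices (at positions
`a, …, n - b - 1`) with `a` pendent vertices attached to its first vertex and `b`
pendent vertices attached to its last vertex. -/
def doubleStar (n a b : ℕ) : SimpleGraph (Fin n) :=
  SimpleGraph.fromRel fun x y =>
    ((x : ℕ) < a ∧ (y : ℕ) = a) ∨
    (a ≤ (x : ℕ) ∧ (x : ℕ) + 1 = y ∧ (y : ℕ) < n - b) ∨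
    ((x : ℕ) = n - b - 1 ∧ n - b ≤ (y : ℕ))

/-- `CP_{n,k}^s` : a path `v_1 ⋯ v_k` (at positions `0, …, k-1`) with all
`n - k` pendent vertices attached to `v_s` (position `s - 1`). -/
def cpOne (n k s : ℕ) : SimpleGraph (Fin n) :=
  SimpleGraph.fromRel fun x y =>
    ((x : ℕ) + 1 = y ∧ (y : ℕ) < k) ∨ ((x : ℕ) = s - 1 ∧ k ≤ (y : ℕ))

/-- The caterpillar `CP(n; n_1, …, n_k)` : a path `v_1 ⋯ v_k` (at positions `0, …, k-1`),
where pendent vertex `j` (for `k ≤ j < n`) is attached to the path vertex at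
position `f j` (so `n_i = |{j : f j = i - 1}|`). -/
def caterpillar (n k : ℕ) (f : ℕ → ℕ) : SimpleGraph (Fin n) :=
  SimpleGraph.fromRel fun x y =>
    ((x : ℕ) + 1 = y ∧ (y : ℕ) < k) ∨ (k ≤ (y : ℕ) ∧ (x : ℕ) = f y)

/-- The balanced starlike tree `SP_{n,q}` : the center is vertex `0`, and vertex
`j ≥ 1` lies on branch `(j - 1) % q` at depth `(j - 1)/q + 1`; so the `q` branches are
paths whose orders pairwise differ by at most `1`. -/
def balancedStar (n q : ℕ) : SimpleGraph (Fin n) :=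
  SimpleGraph.fromRel fun x y =>
    ((x : ℕ) = 0 ∧ 1 ≤ (y : ℕ) ∧ (y : ℕ) ≤ q) ∨ (1 ≤ (x : ℕ) ∧ (x : ℕ) + q = y)

/-- The edge-moving transformation of `G` w.r.t. the edge `uv`: contract `uv` to `u`
(moving all edges at `v` to `u`) and attach `v` to `u` as a pendent vertex. -/
def edgeMove (G : SimpleGraph V) (u v : V) : SimpleGraph V :=
  SimpleGraph.fromRel fun x y =>
    (G.Adj x y ∧ x ≠ v ∧ y ≠ v) ∨ (x = u ∧ y = v) ∨ (x = u ∧ G.Adj v y ∧ y ≠ u)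

section EdgeDivision

open Finset

theorem dist_lt_dist_of_unique_crossing {G : SimpleGraph V} (hG : G.Connected) {u v w : V}
    {D : Set V} (hcut : ∀ x y, x ∉ D → y ∈ D → G.Adj x y → x = u ∧ y = v) (hw : w ∉ D)
    (hv : v ∈ D) : G.dist w u < G.dist w v := by
  obtain ⟨p, hp⟩ := hG.exists_walk_length_eq_dist w v
  obtain ⟨d, hdp, hfst, hsnd⟩ := p.exists_boundary_dart Dᶜ hw (by simpa using hv)
  obtain ⟨hdu, hdv⟩ := hcut d.fst d.snd hfst (by simpa using hsnd) d.adj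
  have hup : u ∈ p.support := hdu ▸ p.dart_fst_mem_support_of_mem_darts hdp
  have huv : u ≠ v := hdu ▸ hdv ▸ d.adj.ne
  calc G.dist w u ≤ (p.takeUntil u hup).length := SimpleGraph.dist_le _
    _ < p.length := p.length_takeUntil_lt_length hup huv
    _ = G.dist w v := hp

theorem side_eq_card_of_unique_crossing [Fintype V] {G : SimpleGraph V} (hG : G.Connected)
    {u v : V} {D : Finset V} (hu : u ∉ D) (hv : v ∈ D)
    (hcut : ∀ x y, x ∉ D → y ∈ D → G.Adj x y → x = u ∧ y = v) : side G v u = #D := by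
  have hout : ∀ w ∉ D, G.dist w u < G.dist w v := fun w hw =>
    dist_lt_dist_of_unique_crossing (D := (D : Set V)) hG hcut hw hv
  have hin : ∀ w ∈ D, G.dist w v < G.dist w u := fun w hw =>
    dist_lt_dist_of_unique_crossing (D := (D : Set V)ᶜ) hG
      (fun x y hx hy h => (hcut y x hy (by simpa using hx) h.symm).symm) (by simpa using hw) hu
  refine congrArg card (Finset.ext fun w => ?_)
  rw [mem_filter_univ]
  exact ⟨fun h => by_contra fun hw => (hout w hw).not_gt h, hin w⟩

theorem mu_eq_of_unique_crossing [Fintype V] {G : SimpleGraph V} (hG : G.Connected) {u v : V}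
    {D : Finset V} (hu : u ∉ D) (hv : v ∈ D)
    (hcut : ∀ x y, x ∉ D → y ∈ D → G.Adj x y → x = u ∧ y = v) :
    mu G u v = min #D (Fintype.card V - #D) := by
  have hside : side G u v = #Dᶜ :=
    side_eq_card_of_unique_crossing hG (by simpa using hv) (by simpa using hu)
      fun x y hx hy h => (hcut y x (by simpa using hy) (by simpa using hx) h.symm).symm
  rw [mu, hside, side_eq_card_of_unique_crossing hG hu hv hcut, card_compl, min_comm]

theorem side_add_side_le_card [Fintype V] (G : SimpleGraph V) (u v : V) :
    side G u v + side G v u ≤ Fintype.card V := by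
  rw [side, side, ← card_union_of_disjoint (disjoint_filter.2 fun _ _ h => h.not_gt)]
  exact card_le_univ _

theorem muE_le_half_card [Fintype V] (G : SimpleGraph V) (e : Sym2 V) :
    muE G e ≤ Fintype.card V / 2 := by
  induction e with
  | _ u v =>
    have h : side G u v + side G v u ≤ Fintype.card V := side_add_side_le_card G u v
    change min (side G u v) (side G v u) ≤ _
    omega

theorem tailSum_eq_card [Fintype V] {n : ℕ} (hn : Fintype.card V = n) (G : SimpleGraph V)
    (t : ℕ) : tailSum G n t = #{e : Sym2 V | e ∈ G.edgeSet ∧ t ≤ muE G e} := by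
  have hmaps : ∀ e ∈ ({e | e ∈ G.edgeSet ∧ t ≤ muE G e} : Finset (Sym2 V)),
      muE G e ∈ Icc t (n / 2) := fun e he =>
    mem_Icc.2 ⟨(mem_filter_univ e).1 he |>.2, hn ▸ muE_le_half_card G e⟩
  rw [card_eq_sum_card_fiberwise hmaps, tailSum]
  refine sum_congr rfl fun i hi => congrArg card (Finset.ext fun e => ?_)
  have hti : t ≤ i := (mem_Icc.1 hi).1
  simp only [mem_filter]
  grind

theorem SameEdgeDivision.tailSum_eq [Fintype V] [Fintype W] {n : ℕ} {G : SimpleGraph V}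
    {H : SimpleGraph W} (h : SameEdgeDivision n G H) {t : ℕ} (ht : 1 ≤ t) :
    tailSum G n t = tailSum H n t :=
  sum_congr rfl fun i hi => h i (ht.trans (mem_Icc.1 hi).1) (mem_Icc.1 hi).2

end EdgeDivision

section Isomorphism

open Finset

variable {G : SimpleGraph V} {H : SimpleGraph W}

theorem range_walk_length_subset_of_hom (φ : G →g H) (x y : V) :
    Set.range (SimpleGraph.Walk.length : G.Walk x y → ℕ) ⊆
      Set.range (SimpleGraph.Walk.length : H.Walk (φ x) (φ y) → ℕ) := by
  rintro _ ⟨p, rfl⟩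
  exact ⟨p.map φ, p.length_map φ⟩

theorem dist_iso_apply (e : G ≃g H) (x y : V) : H.dist (e x) (e y) = G.dist x y := by
  rw [SimpleGraph.dist_eq_sInf, SimpleGraph.dist_eq_sInf]
  refine congrArg sInf (Set.Subset.antisymm ?_ (range_walk_length_subset_of_hom e.toHom x y))
  have h := range_walk_length_subset_of_hom e.symm.toHom (e x) (e y)
  have hsymm (z : V) : e.symm.toHom (e z) = z := e.symm_apply_apply z
  rwa [hsymm, hsymm] at h

theorem mem_edgeSet_map_iso (e : G ≃g H) (z : Sym2 V) : z.map e ∈ H.edgeSet ↔ z ∈ G.edgeSet := by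
  induction z with
  | _ u v => exact e.map_adj_iff

variable [Fintype V] [Fintype W]

theorem side_iso_apply (e : G ≃g H) (u v : V) : side H (e u) (e v) = side G u v :=
  (card_equiv e.toEquiv fun w => by simp [dist_iso_apply]).symm

theorem muE_map_iso (e : G ≃g H) (z : Sym2 V) : muE H (z.map e) = muE G z := by
  induction z with
  | _ u v =>
    change min (side H (e u) (e v)) (side H (e v) (e u)) = min (side G u v) (side G v u)
    rw [side_iso_apply, side_iso_apply]

theorem r_eq_of_iso (e : G ≃g H) (i : ℕ) : r G i = r H i := by
  refine card_nbij' (Sym2.map e) (Sym2.map e.symm) ?_ ?_ ?_ ?_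
  · intro z hz
    simpa [mem_edgeSet_map_iso, muE_map_iso] using hz
  · intro z hz
    simpa [mem_edgeSet_map_iso, muE_map_iso] using hz
  · intro z _
    simp [Sym2.map_map]
  · intro z _
    simp [Sym2.map_map]

theorem sameEdgeDivision_of_iso (e : G ≃g H) (n : ℕ) : SameEdgeDivision n G H :=
  fun i _ _ => r_eq_of_iso e i

theorem nonempty_comap_iso_comap_of_card_fiber_eq {L : Type*} [DecidableEq L]
    (K : SimpleGraph L) {l : V → L}
    {m : W → L} (h : ∀ c, #{v | l v = c} = #{w | m w = c}) :
    Nonempty (K.comap l ≃g K.comap m) := by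
  have hcard (c : L) : Fintype.card {v // l v = c} = Fintype.card {w // m w = c} := by
    simpa only [Fintype.card_subtype] using h c
  let e : V ≃ W := (Equiv.sigmaFiberEquiv l).symm.trans
    ((Equiv.sigmaCongrRight fun c => Fintype.equivOfCardEq (hcard c)).trans
      (Equiv.sigmaFiberEquiv m))
  have he (v : V) : m (e v) = l v := (Fintype.equivOfCardEq (hcard (l v)) ⟨v, rfl⟩).2
  exact ⟨e, by simp [he]⟩

end Isomorphism

section ParentMap

open Finset

/-- `p` is a parent map for the graph `G` rooted at `o`: the edges of `G` join each vertex `v ≠ o`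
to its parent `p v`, which precedes `v`. For a well-founded order such a graph is a tree whose
edges are indexed by the vertices `v ≠ o`. The value `p o` is irrelevant. -/
structure IsParentMap [LT V] (G : SimpleGraph V) (o : V) (p : V → V) : Prop where
  lt : ∀ v, v ≠ o → p v < v
  adj_iff : ∀ u v, G.Adj u v ↔ v ≠ o ∧ u = p v ∨ u ≠ o ∧ v = p u

namespace IsParentMap

variable [Preorder V] {G : SimpleGraph V} {o : V} {p : V → V}

theorem adj (h : IsParentMap G o p) {v : V} (hv : v ≠ o) : G.Adj (p v) v :=
  (h.adj_iff _ _).2 (Or.inl ⟨hv, rfl⟩)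

theorem connected [WellFoundedLT V] (h : IsParentMap G o p) : G.Connected := by
  have hreach (v : V) : G.Reachable o v := by
    induction v using WellFoundedLT.induction with
    | ind v ih =>
      by_cases hv : v = o
      · rw [hv]
      · exact (ih _ (h.lt v hv)).trans (h.adj hv).reachable
  have : Nonempty V := ⟨o⟩
  exact SimpleGraph.Connected.mk fun u v => (hreach u).symm.trans (hreach v)

variable [Fintype V]

theorem card_filter_edgeSet [DecidableEq V] (h : IsParentMap G o p) (P : Sym2 V → Prop)
    [DecidablePred P] :
    #{e : Sym2 V | e ∈ G.edgeSet ∧ P e} = #{v | v ≠ o ∧ P s(p v, v)} := by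
  symm
  refine card_nbij (fun v => s(p v, v)) ?_ ?_ ?_
  · intro v hv
    simp only [coe_filter_univ, Set.mem_ofPred_eq] at hv ⊢
    exact ⟨h.adj hv.1, hv.2⟩
  · intro v hv w hw hvw
    simp only [coe_filter_univ, Set.mem_ofPred_eq] at hv hw
    rcases Sym2.eq_iff.1 hvw with ⟨-, hvw⟩ | ⟨hpv, hpw⟩
    · exact hvw
    · exact absurd (hpv ▸ h.lt v hv.1) (hpw ▸ h.lt w hw.1).asymm
  · intro e he
    simp only [coe_filter_univ, Set.mem_ofPred_eq] at he
    induction e with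
    | _ u v =>
      rcases (h.adj_iff u v).1 he.1 with ⟨hv, rfl⟩ | ⟨hu, rfl⟩
      · exact ⟨v, by simpa using ⟨hv, he.2⟩, rfl⟩
      · exact ⟨u, by simpa [Sym2.eq_swap] using ⟨hu, he.2⟩, Sym2.eq_swap⟩

theorem mu_eq (h : IsParentMap G o p) {v : V} {D : Finset V} (hpv : p v ∉ D)
    (hv : v ∈ D) (hD : ∀ x, x ≠ o → x ≠ v → (x ∈ D ↔ p x ∈ D)) :
    mu G (p v) v = min #D (Fintype.card V - #D) := by
  refine mu_eq_of_unique_crossing h.connected hpv hv fun x y hx hy hxy => ?_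
  rcases (h.adj_iff x y).1 hxy with ⟨hyo, rfl⟩ | ⟨hxo, rfl⟩
  · obtain rfl : y = v := by_contra fun hyv => hx ((hD y hyo hyv).1 hy)
    exact ⟨rfl, rfl⟩
  · have hxv : x ≠ v := fun hxv => hx (hxv ▸ hv)
    exact absurd ((hD x hxo hxv).2 hy) hx

end IsParentMap

end ParentMap

section Caterpillar

open Finset

variable {n k : ℕ} {f : ℕ → ℕ}

/-- The parent of a vertex of the caterpillar `caterpillar n k f` rooted at the first spine vertex
`0`: the preceding spine vertex, or the spine vertex to which a pendent vertex is attached. -/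
def caterpillarParent (hf : ∀ j, k ≤ j → j < n → f j < k) (y : Fin n) : Fin n :=
  ⟨if (y : ℕ) < k then y - 1 else f y, by have := hf y; split_ifs <;> omega⟩

theorem isParentMap_caterpillar (hn : 0 < n) (hf : ∀ j, k ≤ j → j < n → f j < k) :
    IsParentMap (caterpillar n k f) ⟨0, hn⟩ (caterpillarParent hf) where
  lt v hv := by
    have := hf v
    simp only [caterpillarParent, ne_eq, Fin.ext_iff, Fin.lt_def] at hv ⊢
    split_ifs <;> omega
  adj_iff u v := by
    have := hf u
    have := hf v
    simp only [caterpillar, SimpleGraph.fromRel_adj, caterpillarParent, ne_eq, Fin.ext_iff]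
    split_ifs <;> omega

/-- The number of vertices of `caterpillar n k f` beyond the spine edge joining the positions
`y - 1` and `y`: the spine vertices `y, …, k - 1` and the pendent vertices attached to them. -/
noncomputable def spineWeight (n k : ℕ) (f : ℕ → ℕ) (y : ℕ) : ℕ :=
  (k - y) + #{j ∈ Ico k n | y ≤ f j}

theorem mu_caterpillar_of_lt (hkn : k ≤ n) (hf : ∀ j, k ≤ j → j < n → f j < k) {y : Fin n}
    (hy : 1 ≤ (y : ℕ)) (hyk : (y : ℕ) < k) :
    mu (caterpillar n k f) (caterpillarParent hf y) y =
      min (spineWeight n k f y) (n - spineWeight n k f y) := by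
  let s : Finset ℕ := Ico (y : ℕ) k ∪ {j ∈ Ico k n | (y : ℕ) ≤ f j}
  have hmem (j : ℕ) : j ∈ s ↔ (y : ℕ) ≤ j ∧ j < k ∨ (k ≤ j ∧ j < n) ∧ (y : ℕ) ≤ f j := by
    simp only [s, mem_union, mem_filter, mem_Ico]
  have hs : ∀ j ∈ s, j < n := fun j hj => by rw [hmem] at hj; omega
  have hcard : #(s.attachFin hs) = spineWeight n k f y := by
    rw [card_attachFin, card_union_of_disjoint, Nat.card_Ico, spineWeight]
    exact disjoint_left.2 fun j hj hj' => by simp only [mem_filter, mem_Ico] at hj hj'; omega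
  rw [(isParentMap_caterpillar (by omega) hf).mu_eq (D := s.attachFin hs), hcard, Fintype.card_fin]
  · simp only [mem_attachFin, hmem, caterpillarParent]
    split_ifs; omega
  · simp only [mem_attachFin, hmem]
    omega
  · intro x hx0 hxy
    have := hf x
    simp only [mem_attachFin, hmem, caterpillarParent, ne_eq, Fin.ext_iff] at hx0 hxy ⊢
    split_ifs <;> omega

theorem mu_caterpillar_of_le (hf : ∀ j, k ≤ j → j < n → f j < k) {y : Fin n} (hyk : k ≤ (y : ℕ)) :
    mu (caterpillar n k f) (caterpillarParent hf y) y = 1 := by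
  have := hf y
  rw [(isParentMap_caterpillar (by omega) hf).mu_eq (D := {y}), card_singleton, Fintype.card_fin]
  · omega
  · simp only [mem_singleton, caterpillarParent, Fin.ext_iff]
    split_ifs <;> omega
  · exact mem_singleton_self y
  · intro x hx0 hxy
    have := hf x
    simp only [mem_singleton, caterpillarParent, ne_eq, Fin.ext_iff] at hx0 hxy ⊢
    split_ifs <;> omega

/-- The spine edges of `caterpillar n k f` with `μ ≥ t`, each represented by the position of its
endpoint further from position `0`. -/
noncomputable def deepSpineEdges (n k : ℕ) (f : ℕ → ℕ) (t : ℕ) : Finset ℕ :=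
  {y ∈ Ico 1 k | spineWeight n k f y ∈ Icc t (n - t)}

theorem mem_deepSpineEdges {t y : ℕ} : y ∈ deepSpineEdges n k f t ↔
    (1 ≤ y ∧ y < k) ∧ t ≤ spineWeight n k f y ∧ spineWeight n k f y ≤ n - t := by
  rw [deepSpineEdges, mem_filter, mem_Ico, mem_Icc]

theorem card_filter_fin_univ (n : ℕ) (P : ℕ → Prop) [DecidablePred P] :
    #{i : Fin n | P i} = #{j ∈ range n | P j} := by
  simp only [card_filter, Fin.sum_univ_eq_sum_range fun j => if P j then 1 else 0]

theorem tailSum_caterpillar (hk : 1 ≤ k) (hkn : k ≤ n) (hf : ∀ j, k ≤ j → j < n → f j < k) {t : ℕ}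
    (ht : 1 ≤ t) : tailSum (caterpillar n k f) n t =
      #(deepSpineEdges n k f t) + if t = 1 then n - k else 0 := by
  let s : Finset ℕ := deepSpineEdges n k f t ∪ {_y ∈ Ico k n | t = 1}
  have hmem (j : ℕ) : j ∈ s ↔ ((1 ≤ j ∧ j < k) ∧ t ≤ spineWeight n k f j ∧
      spineWeight n k f j ≤ n - t) ∨ (k ≤ j ∧ j < n) ∧ t = 1 := by
    simp only [s, mem_union, mem_deepSpineEdges, mem_filter, mem_Ico]
  have hdisj : Disjoint (deepSpineEdges n k f t) {_y ∈ Ico k n | t = 1} :=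
    disjoint_left.2 fun j hj hj' => by
      simp only [mem_deepSpineEdges, mem_filter, mem_Ico] at hj hj'
      omega
  have hedge (y : Fin n) : (y ≠ ⟨0, by omega⟩ ∧
      t ≤ mu (caterpillar n k f) (caterpillarParent hf y) y) ↔ (y : ℕ) ∈ s := by
    simp only [hmem, ne_eq, Fin.ext_iff]
    rcases lt_or_ge (y : ℕ) k with hyk | hyk
    · by_cases hy : 1 ≤ (y : ℕ)
      · rw [mu_caterpillar_of_lt hkn hf hy hyk]
        omega
      · omega
    · rw [mu_caterpillar_of_le hf hyk]
      omega
  have hs : s ⊆ range n := fun j hj => by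
    rw [hmem] at hj
    exact mem_range.2 (by omega)
  calc tailSum (caterpillar n k f) n t = #{y : Fin n | (y : ℕ) ∈ s} := by
        rw [tailSum_eq_card (Fintype.card_fin n),
          (isParentMap_caterpillar (by omega) hf).card_filter_edgeSet]
        exact congrArg card (filter_congr fun y _ => hedge y)
    _ = #s := by
        rw [card_filter_fin_univ n (· ∈ s), filter_mem_eq_inter, inter_eq_right.2 hs]
    _ = #(deepSpineEdges n k f t) + if t = 1 then n - k else 0 := by
        rw [card_union_of_disjoint hdisj, filter_const, apply_ite card, Nat.card_Ico, card_empty]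

theorem spineWeight_add_sub_le {y z : ℕ} (hyz : y ≤ z) (hz : z ≤ k) :
    spineWeight n k f z + (z - y) ≤ spineWeight n k f y := by
  have hle : #{j ∈ Ico k n | z ≤ f j} ≤ #{j ∈ Ico k n | y ≤ f j} :=
    card_le_card (monotone_filter_right _ fun j _ hj => hyz.trans hj)
  simp only [spineWeight]
  omega

theorem strictAntiOn_spineWeight (n k : ℕ) (f : ℕ → ℕ) :
    StrictAntiOn (spineWeight n k f) (Set.Iic k) := fun _ _ _ hz hyz => by
  have := spineWeight_add_sub_le (n := n) (f := f) hyz.le hz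
  omega

theorem spineWeight_one_add_card_first (hk : 1 ≤ k) (hkn : k ≤ n) (f : ℕ → ℕ) :
    spineWeight n k f 1 + #{j ∈ Ico k n | f j = 0} = n - 1 := by
  have h : #{j ∈ Ico k n | f j = 0} + #{j ∈ Ico k n | 1 ≤ f j} = n - k := by
    rw [← Nat.card_Ico, ← card_filter_add_card_filter_not (s := Ico k n) (fun j => f j = 0)]
    simp only [Nat.one_le_iff_ne_zero, ne_eq]
  rw [spineWeight]
  omega

theorem spineWeight_pred (hk : 1 ≤ k) (hf : ∀ j, k ≤ j → j < n → f j < k) :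
    spineWeight n k f (k - 1) = 1 + #{j ∈ Ico k n | f j = k - 1} := by
  have h : ({j ∈ Ico k n | k - 1 ≤ f j} : Finset ℕ) = {j ∈ Ico k n | f j = k - 1} :=
    filter_congr fun j hj => by
      have := hf j (mem_Ico.1 hj).1 (mem_Ico.1 hj).2
      omega
  rw [spineWeight, h, Nat.sub_sub_self hk]

theorem card_deepSpineEdges_le (n k : ℕ) (f : ℕ → ℕ) (t : ℕ) :
    #(deepSpineEdges n k f t) ≤ min (k - 1) (n + 1 - 2 * t) := by
  refine le_min ((card_filter_le _ _).trans (Nat.card_Ico 1 k).le) ?_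
  have hinj : Set.InjOn (spineWeight n k f) (deepSpineEdges n k f t) :=
    (strictAntiOn_spineWeight n k f).injOn.mono fun y hy => (mem_deepSpineEdges.1 hy).1.2.le
  calc #(deepSpineEdges n k f t) ≤ #(Icc t (n - t)) :=
        card_le_card_of_injOn _ (fun y hy => (mem_filter.1 hy).2) hinj
    _ = n + 1 - 2 * t := by rw [Nat.card_Icc]; omega

/-- The attachment map on pendent vertices that makes the caterpillar with `k` spine vertices the
double star path with `a` pendent vertices at the first spine vertex and all others at the last. -/
def endAttachment (k a j : ℕ) : ℕ := if j < k + a then 0 else k - 1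

theorem endAttachment_lt (hk : 1 ≤ k) (a j : ℕ) : endAttachment k a j < k := by
  rw [endAttachment]
  split_ifs <;> omega

theorem filter_endAttachment_eq_zero {a b : ℕ} (hk : 2 ≤ k) (hn : n = a + b + k) :
    ({j ∈ Ico k n | endAttachment k a j = 0} : Finset ℕ) = Ico k (k + a) := by
  ext j
  rw [mem_filter, mem_Ico, mem_Ico, endAttachment]
  split_ifs <;> omega

theorem filter_le_endAttachment (n : ℕ) {a y : ℕ} (hy : 1 ≤ y) (hyk : y < k) :
    ({j ∈ Ico k n | y ≤ endAttachment k a j} : Finset ℕ) = Ico (k + a) n := by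
  ext j
  rw [mem_filter, mem_Ico, mem_Ico, endAttachment]
  split_ifs <;> omega

theorem spineWeight_endAttachment {a b y : ℕ} (hn : n = a + b + k) (hy : 1 ≤ y) (hyk : y < k) :
    spineWeight n k (endAttachment k a) y = k - y + b := by
  rw [spineWeight, filter_le_endAttachment n hy hyk, Nat.card_Ico]
  omega

theorem card_deepSpineEdges_endAttachment {a b t : ℕ} (hn : n = a + b + k) (hab : a ≤ b)
    (hba : b ≤ a + 1) :
    #(deepSpineEdges n k (endAttachment k a) t) = min (k - 1) (n + 1 - 2 * t) := by
  have h : deepSpineEdges n k (endAttachment k a) t =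
      Icc (max 1 (t - a)) (min (k - 1) (k + b - t)) := by
    ext y
    rw [mem_deepSpineEdges, mem_Icc]
    by_cases hy : 1 ≤ y ∧ y < k
    · rw [spineWeight_endAttachment hn hy.1 hy.2]
      omega
    · omega
  rw [h, Nat.card_Icc]
  omega

theorem card_ends_of_card_deepSpineEdges_eq {a b : ℕ} (hn : n = a + b + k) (hab : a ≤ b)
    (hba : b ≤ a + 1) (hk : 2 ≤ k) (hf : ∀ j, k ≤ j → j < n → f j < k)
    (h : ∀ t, 1 ≤ t → #(deepSpineEdges n k f t) = min (k - 1) (n + 1 - 2 * t)) :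
    #{j ∈ Ico k n | f j = 0} = a ∧ #{j ∈ Ico k n | f j = k - 1} = b ∨
      #{j ∈ Ico k n | f j = 0} = b ∧ #{j ∈ Ico k n | f j = k - 1} = a := by
  have hfirst := spineWeight_one_add_card_first (by omega : 1 ≤ k) (by omega : k ≤ n) f
  have hlast := spineWeight_pred (by omega : 1 ≤ k) hf
  have hall : ∀ y ∈ Ico 1 k, spineWeight n k f y ∈ Icc (a + 1) (n - (a + 1)) := by
    refine card_filter_eq_iff.1 ((h (a + 1) (by omega)).trans ?_)
    rw [Nat.card_Ico]
    omega
  have hone := mem_Icc.1 (hall 1 (mem_Ico.2 (by omega)))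
  have hpred := mem_Icc.1 (hall (k - 1) (mem_Ico.2 (by omega)))
  by_contra hne
  rcases hk.eq_or_lt with rfl | hk3
  · simp only [Nat.add_one_sub_one] at *
    omega
  have hends : spineWeight n k f (k - 1) + (k - 1 - 1) ≤ spineWeight n k f 1 :=
    spineWeight_add_sub_le (by omega) (by omega)
  have hsub : deepSpineEdges n k f (a + 2) ⊆ Ioo 1 (k - 1) := fun y hy => by
    rw [mem_deepSpineEdges] at hy
    have hy1 : y ≠ 1 := by rintro rfl; omega
    have hyk : y ≠ k - 1 := by rintro rfl; omega
    exact mem_Ioo.2 (by omega)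
  have hcard := card_le_card hsub
  rw [h (a + 2) (by omega), Nat.card_Ioo] at hcard
  omega

/-- The comb: the path `0, …, k - 1` with a pendent vertex `k + c` at each path vertex `c < k`.
Caterpillars arise from it by replicating or deleting pendent vertices. -/
def comb (k : ℕ) : SimpleGraph ℕ :=
  SimpleGraph.fromRel fun c d => (c + 1 = d ∧ d < k) ∨ (c < k ∧ d = k + c)

theorem caterpillar_eq_comap_comb (hf : ∀ j, k ≤ j → j < n → f j < k) :
    caterpillar n k f =
      (comb k).comap fun j : Fin n => if (j : ℕ) < k then (j : ℕ) else k + f j := by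
  ext x y
  have := hf x
  have := hf y
  simp only [caterpillar, comb, SimpleGraph.comap_adj, SimpleGraph.fromRel_adj, ne_eq, Fin.ext_iff]
  split_ifs <;> omega

theorem doubleStar_eq_comap_comb {a b : ℕ} (hk : 1 ≤ k) (hn : n = a + b + k) :
    doubleStar n a b = (comb k).comap fun j : Fin n =>
      if (j : ℕ) < a then k else if (j : ℕ) < a + k then j - a else k + (k - 1) := by
  ext x y
  have := x.2
  have := y.2
  simp only [doubleStar, comb, SimpleGraph.comap_adj, SimpleGraph.fromRel_adj, ne_eq, Fin.ext_iff]
  split_ifs <;> omega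

theorem card_fiber_caterpillar (hkn : k ≤ n) (f : ℕ → ℕ) (c : ℕ) :
    #{j : Fin n | (if (j : ℕ) < k then (j : ℕ) else k + f j) = c} =
      if c < k then 1 else #{j ∈ Ico k n | k + f j = c} := by
  rw [card_filter_fin_univ n fun j => (if j < k then j else k + f j) = c]
  split_ifs with hc
  · refine card_eq_one.2 ⟨c, Finset.ext fun j => ?_⟩
    rw [mem_filter, mem_range, mem_singleton]
    split_ifs <;> omega
  · refine congrArg card (Finset.ext fun j => ?_)
    rw [mem_filter, mem_filter, mem_range, mem_Ico]
    split_ifs <;> omega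

theorem card_fiber_doubleStar {a b : ℕ} (hk : 2 ≤ k) (hn : n = a + b + k) (c : ℕ) :
    #{j : Fin n |
      (if (j : ℕ) < a then k else if (j : ℕ) < a + k then j - a else k + (k - 1)) = c} =
      if c < k then 1 else if c = k then a else if c = k + (k - 1) then b else 0 := by
  rw [card_filter_fin_univ n fun j =>
    (if j < a then k else if j < a + k then j - a else k + (k - 1)) = c]
  split_ifs with hc hcfirst hclast
  · refine card_eq_one.2 ⟨a + c, Finset.ext fun j => ?_⟩
    rw [mem_filter, mem_range, mem_singleton]
    split_ifs <;> omega
  · refine (congrArg card (Finset.ext fun j => ?_)).trans (card_range a)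
    rw [mem_filter, mem_range, mem_range]
    split_ifs <;> omega
  · have hb : #(Ico (a + k) n) = b := by rw [Nat.card_Ico]; omega
    refine (congrArg card (Finset.ext fun j => ?_)).trans hb
    rw [mem_filter, mem_range, mem_Ico]
    split_ifs <;> omega
  · refine card_eq_zero.2 (filter_eq_empty_iff.2 fun j hj => ?_)
    rw [mem_range] at hj
    split_ifs <;> omega

theorem eq_zero_or_eq_pred_of_card_ends (hk : 2 ≤ k)
    (h : #{j ∈ Ico k n | f j = 0} + #{j ∈ Ico k n | f j = k - 1} = n - k) :
    ∀ j ∈ Ico k n, f j = 0 ∨ f j = k - 1 := by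
  have hdisj : Disjoint ({j ∈ Ico k n | f j = 0} : Finset ℕ) {j ∈ Ico k n | f j = k - 1} :=
    disjoint_filter.2 fun j _ hj hj' => by omega
  rw [← card_filter_eq_iff, filter_or, card_union_of_disjoint hdisj, h, Nat.card_Ico]

theorem caterpillar_iso_doubleStar {a b : ℕ} (hk : 2 ≤ k) (hn : n = a + b + k)
    (hf : ∀ j, k ≤ j → j < n → f j < k) (hfirst : #{j ∈ Ico k n | f j = 0} = a)
    (hlast : #{j ∈ Ico k n | f j = k - 1} = b) :
    Nonempty (caterpillar n k f ≃g doubleStar n a b) := by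
  have hends := eq_zero_or_eq_pred_of_card_ends (n := n) (f := f) hk (by omega)
  rw [caterpillar_eq_comap_comb hf, doubleStar_eq_comap_comb (by omega) hn]
  refine nonempty_comap_iso_comap_of_card_fiber_eq _ fun c => ?_
  rw [card_fiber_caterpillar (by omega), card_fiber_doubleStar hk hn]
  split_ifs with hc hcfirst hclast
  · rfl
  · simpa [hcfirst] using hfirst
  · simpa [hclast] using hlast
  · refine card_eq_zero.2 (filter_eq_empty_iff.2 fun j hj => ?_)
    have := hends j hj
    omega

theorem doubleStar_iso_swap {a b : ℕ} (ha : a < n) (hb : b < n) :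
    Nonempty (doubleStar n a b ≃g doubleStar n b a) := by
  refine ⟨⟨Fin.revPerm, ?_⟩⟩
  intro x y
  simp only [doubleStar, SimpleGraph.fromRel_adj, ne_eq, Fin.revPerm_apply, Fin.ext_iff,
    Fin.val_rev]
  omega

theorem tailSum_doubleStar {a b t : ℕ} (hk : 2 ≤ k) (hn : n = a + b + k) (hab : a ≤ b)
    (hba : b ≤ a + 1) (ht : 1 ≤ t) :
    tailSum (doubleStar n a b) n t =
      min (k - 1) (n + 1 - 2 * t) + if t = 1 then n - k else 0 := by
  have hlt (j : ℕ) (_ : k ≤ j) (_ : j < n) : endAttachment k a j < k :=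
    endAttachment_lt (by omega) a j
  have hfirst : #{j ∈ Ico k n | endAttachment k a j = 0} = a := by
    rw [filter_endAttachment_eq_zero hk hn, Nat.card_Ico, Nat.add_sub_cancel_left]
  have hlast : #{j ∈ Ico k n | endAttachment k a j = k - 1} = b := by
    have hpred := spineWeight_pred (by omega) hlt
    rw [spineWeight_endAttachment hn (by omega) (by omega)] at hpred
    omega
  obtain ⟨e⟩ := caterpillar_iso_doubleStar hk hn hlt hfirst hlast
  rw [← (sameEdgeDivision_of_iso e n).tailSum_eq ht,
    tailSum_caterpillar (by omega) (by omega) hlt ht,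
    card_deepSpineEdges_endAttachment hn hab hba]

end Caterpillar

/-- Let `T = CP(n; n₁, …, n_k) ∈ C(n,k)` be a caterpillar tree with respect to
the path `P_k`, where `2 ≤ k ≤ n − 1`. Then `T ⪯ CP_{n;⌊(n−k)/2⌋,⌈(n−k)/2⌉}`, and
`r(T) = r(CP_{n;⌊(n−k)/2⌋,⌈(n−k)/2⌉})` iff `T` is isomorphic to it. -/
theorem stmt9 (n k : ℕ) (f : ℕ → ℕ) (hk2 : 2 ≤ k) (hkn : k ≤ n - 1)
    (hf : ∀ j, k ≤ j → j < n → f j < k) :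
    Preceq n (caterpillar n k f) (doubleStar n ((n - k) / 2) ((n - k + 1) / 2)) ∧
    (SameEdgeDivision n (caterpillar n k f)
        (doubleStar n ((n - k) / 2) ((n - k + 1) / 2)) ↔
      Nonempty (caterpillar n k f ≃g doubleStar n ((n - k) / 2) ((n - k + 1) / 2))) := by
  generalize ha : (n - k) / 2 = a
  generalize hb : (n - k + 1) / 2 = b
  have hn : n = a + b + k := by omega
  have hab : a ≤ b := by omega
  have hba : b ≤ a + 1 := by omega
  refine ⟨fun t ht _ => ?_, fun h => ?_, fun ⟨e⟩ => sameEdgeDivision_of_iso e n⟩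
  · rw [tailSum_caterpillar (by omega) (by omega) hf ht, tailSum_doubleStar hk2 hn hab hba ht]
    exact Nat.add_le_add_right (card_deepSpineEdges_le n k f t) _
  · have hmax (t : ℕ) (ht : 1 ≤ t) :
        (deepSpineEdges n k f t).card = min (k - 1) (n + 1 - 2 * t) := by
      have htail := h.tailSum_eq ht
      rw [tailSum_caterpillar (by omega) (by omega) hf ht,
        tailSum_doubleStar hk2 hn hab hba ht] at htail
      exact Nat.add_right_cancel htail
    rcases card_ends_of_card_deepSpineEdges_eq hn hab hba hk2 hf hmax with
      ⟨hfirst, hlast⟩ | ⟨hfirst, hlast⟩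
    · exact caterpillar_iso_doubleStar hk2 hn hf hfirst hlast
    · obtain ⟨e⟩ := caterpillar_iso_doubleStar hk2 (by omega) hf hfirst hlast
      obtain ⟨e'⟩ := doubleStar_iso_swap (n := n) (a := b) (b := a) (by omega) (by omega)
      exact ⟨e.trans e'⟩

end TreeOrder
end

section
/- Let T be a tree on n vertices with exactly q pendent vertices, where 2 < q < n − 1. Then T ⪯ CP_{n;⌊q/2⌋,⌈q/2⌉}, and r(T) = r(CP_{n;⌊q/2⌋,⌈q/2⌉}) if and only if T is isomorphic to CP_{n;⌊q/2⌋,⌈q/2⌉}. -/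
namespace TreeOrder

attribute [local instance] Classical.propDecidable

variable {V : Type*} {W : Type*}

/-!
The `k`-th tail sum of the edge division vector of a tree on `n` vertices counts the heavy edges,
those with `μ ≥ k`. For `k ≥ 2` no pendent vertex lies on a heavy edge, so the heavy edges form a
forest on at most `n - q` vertices and there are fewer than `n - q` of them. Moreover, each of the
two sides of a heavy edge contains an inclusion-minimal side of a heavy edge; such a side has at
least `k` vertices, of which only one lies on a heavy edge. Hence there are at most `n + 1 - 2 * k`
heavy edges. The balanced double star path attains the smaller of the two bounds for every `k ≥ 2`.

If a tree has as many heavy edges as the balanced double star path for every `k`, then its heavy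
edges for `k = 2` stay heavy up to `k = ⌊q/2⌋ + 1`. Applied to the edges leaving two stars at the
ends of the tree, this gives at least `⌊q/2⌋` pendent vertices in each of the two stars. For odd `q`
the tail sum at `k = ⌊q/2⌋ + 2` excludes equality in both. So the two stars contain all the pendent
vertices, and the rest of the tree is the path between their centers.
-/

section

open Finset SimpleGraph

section Geodesics

variable {G : SimpleGraph V} {s t u v w x y : V}

lemma exists_adj_dist_eq_add_one (hG : G.Connected) (h : v ≠ w) :
    ∃ p, G.Adj w p ∧ G.dist v w = G.dist v p + 1 := by
  obtain ⟨c, hc⟩ := hG.exists_walk_length_eq_dist w v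
  cases c with
  | nil => exact absurd rfl h
  | @cons _ p _ hwp c =>
    have hle := dist_le c
    have htri := hG.dist_triangle (u := w) (v := p) (w := v)
    rw [dist_eq_one_iff_adj.2 hwp] at htri
    rw [Walk.length_cons] at hc
    exact ⟨p, hwp, by rw [dist_comm (u := v), dist_comm (u := v)]; omega⟩

lemma eq_of_adj_of_dist_eq_add_one (hT : G.IsTree) (hx : G.Adj w x) (hy : G.Adj w y)
    (hdx : G.dist v w = G.dist v x + 1) (hdy : G.dist v w = G.dist v y + 1) : x = y := by
  have isPath_cons {z : V} (hz : G.Adj w z) (hdz : G.dist v w = G.dist v z + 1)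
      (p : G.Walk z v) (hp : p.length = G.dist z v) : (Walk.cons hz p).IsPath :=
    Walk.isPath_of_length_eq_dist _ <| by
      rw [Walk.length_cons, hp, dist_comm, ← hdz, dist_comm]
  obtain ⟨p, hp⟩ := hT.connected.exists_walk_length_eq_dist x v
  obtain ⟨q, hq⟩ := hT.connected.exists_walk_length_eq_dist y v
  have hpq := (hT.existsUnique_path w v).unique (isPath_cons hx hdx p hp) (isPath_cons hy hdy q hq)
  simpa using congrArg Walk.snd hpq

lemma dist_add_dist_of_mem_support {p : G.Walk s t} (hp : p.length = G.dist s t)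
    (hw : w ∈ p.support) : G.dist s w + G.dist w t = G.dist s t := by
  have htake := length_eq_dist_of_subwalk hp (p.isSubwalk_takeUntil hw)
  have hdrop := length_eq_dist_of_subwalk hp (p.isSubwalk_dropUntil hw)
  have hlen := congrArg Walk.length (p.take_spec hw)
  rw [Walk.length_append] at hlen
  omega

lemma mem_support_iff_dist_add_dist_eq (hT : G.IsTree) {p : G.Walk s t} (hp : p.IsPath) :
    w ∈ p.support ↔ G.dist s w + G.dist w t = G.dist s t := by
  obtain ⟨g, hg, hgd⟩ := hT.connected.exists_path_of_dist s t
  obtain rfl := (hT.existsUnique_path s t).unique hp hg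
  refine ⟨dist_add_dist_of_mem_support hgd, fun h => ?_⟩
  obtain ⟨c, hc⟩ := hT.connected.exists_walk_length_eq_dist s w
  obtain ⟨d, hd⟩ := hT.connected.exists_walk_length_eq_dist w t
  have hcd : (c.append d).IsPath :=
    Walk.isPath_of_length_eq_dist _ (by rw [Walk.length_append, hc, hd, h])
  rw [(hT.existsUnique_path s t).unique hp hcd, Walk.mem_support_append_iff]
  exact Or.inl c.end_mem_support

lemma dist_add_dist_of_forall_adj (hG : G.Connected) {C : Set V}
    (hC : ∀ a b, G.Adj a b → a ∈ C → b ∉ C → a = u) (hx : x ∈ C) (hy : y ∉ C) :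
    G.dist x u + G.dist u y = G.dist x y := by
  obtain ⟨p, hp⟩ := hG.exists_walk_length_eq_dist x y
  obtain ⟨d, hd, hfst, hsnd⟩ := p.exists_boundary_dart C hx hy
  obtain rfl := hC _ _ d.adj hfst hsnd
  exact dist_add_dist_of_mem_support hp (p.dart_fst_mem_support_of_mem_darts hd)

end Geodesics

section SideSet

variable [Fintype V] {G : SimpleGraph V} {a b p u v w : V}

/-- The vertices strictly closer to `u` than to `v`: for an edge `uv` of a tree, the vertex set of
the component of `u` after deleting `uv`. Its cardinality is `side G u v`. -/
noncomputable def sideSet (G : SimpleGraph V) (u v : V) : Finset V :=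
  {w | G.dist w u < G.dist w v}

lemma mem_sideSet : w ∈ sideSet G u v ↔ G.dist w u < G.dist w v := by
  simp only [sideSet, mem_filter_univ]

lemma card_sideSet (G : SimpleGraph V) (u v : V) : #(sideSet G u v) = side G u v := rfl

lemma left_mem_sideSet (h : G.Adj u v) : u ∈ sideSet G u v := by
  rw [mem_sideSet, dist_self, dist_eq_one_iff_adj.2 h]
  exact one_pos

lemma disjoint_sideSet : Disjoint (sideSet G u v) (sideSet G v u) := by
  rw [Finset.disjoint_left]
  intro w huv hvu
  rw [mem_sideSet] at huv hvu
  omega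

lemma sideSet_eq_of_forall_adj (hG : G.Connected) {C : Finset V} (h : G.Adj u v) (hu : u ∈ C)
    (hv : v ∉ C) (hC : ∀ a b, G.Adj a b → a ∈ C → b ∉ C → a = u ∧ b = v) :
    sideSet G u v = C := by
  have huv : G.dist u v = 1 := dist_eq_one_iff_adj.2 h
  ext w
  rw [mem_sideSet]
  refine ⟨fun hw => by_contra fun hwC => ?_, fun hw => ?_⟩
  · have := dist_add_dist_of_forall_adj hG (C := (C : Set V)ᶜ) (u := v)
      (fun a b hab ha hb => (hC b a hab.symm (by simpa using hb) ha).2) hwC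
      (by simpa using hu)
    omega
  · have := dist_add_dist_of_forall_adj hG (C := (C : Set V)) (u := u)
      (fun a b hab ha hb => (hC a b hab ha hb).1) hw hv
    omega

lemma compl_sideSet (hT : G.IsTree) (h : G.Adj u v) : (sideSet G u v)ᶜ = sideSet G v u := by
  ext w
  rw [mem_compl, mem_sideSet, mem_sideSet]
  have := hT.dist_eq_dist_add_one_of_adj w h
  omega

lemma side_add_side (hT : G.IsTree) (h : G.Adj u v) :
    side G u v + side G v u = Fintype.card V := by
  rw [← card_sideSet, ← card_sideSet, ← compl_sideSet hT h, card_add_card_compl]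

lemma eq_and_eq_of_adj_of_mem_sideSet (hT : G.IsTree) (h : G.Adj u v) (hab : G.Adj a b)
    (ha : a ∈ sideSet G u v) (hb : b ∉ sideSet G u v) : a = u ∧ b = v := by
  rw [mem_sideSet] at ha hb
  have ha' := hT.dist_eq_dist_add_one_of_adj a h
  have hb' := hT.dist_eq_dist_add_one_of_adj b h
  have hu := hT.dist_eq_dist_add_one_of_adj u hab
  have hv := hT.dist_eq_dist_add_one_of_adj v hab
  simp only [dist_comm (u := u), dist_comm (u := v)] at hu hv
  obtain rfl : a = u := by
    by_contra hau
    obtain ⟨c, hac, hc⟩ := exists_adj_dist_eq_add_one hT.connected (Ne.symm hau)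
    have hcv := hT.dist_eq_dist_add_one_of_adj v hac
    have hcuv := hT.dist_eq_dist_add_one_of_adj c h
    simp only [dist_comm (u := u), dist_comm (u := v)] at hc hcv
    obtain rfl : b = c := eq_of_adj_of_dist_eq_add_one hT (v := v) hab hac
      (by simp only [dist_comm (u := v)]; omega) (by simp only [dist_comm (u := v)]; omega)
    omega
  rw [dist_self] at hu
  exact ⟨rfl, hT.connected.dist_eq_zero_iff.1 (by omega)⟩

lemma sideSet_ssubset (hT : G.IsTree) (huv : G.Adj u v) (hwp : G.Adj w p)
    (hw : w ∈ sideSet G u v) (hu : u ∉ sideSet G w p) : sideSet G w p ⊂ sideSet G u v := by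
  refine (ssubset_iff_of_subset fun z hz => by_contra fun hzv => ?_).2
    ⟨u, left_mem_sideSet huv, hu⟩
  have hzu := dist_add_dist_of_forall_adj hT.connected (C := (sideSet G w p : Set V)) (u := w)
    (fun a b hab ha hb => (eq_and_eq_of_adj_of_mem_sideSet hT hwp hab ha hb).1) hz hu
  have hzw := dist_add_dist_of_forall_adj hT.connected (C := (sideSet G u v : Set V)ᶜ) (u := v)
    (fun a b hab ha hb =>
      (eq_and_eq_of_adj_of_mem_sideSet hT huv hab.symm (by simpa using hb) ha).2) hzv
      (by simpa using hw)
  have htri := hT.connected.dist_triangle (u := z) (v := v) (w := u)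
  have hvu : G.dist v u = 1 := dist_eq_one_iff_adj.2 huv.symm
  have hwu : w ≠ u := fun h => hu (h ▸ left_mem_sideSet hwp)
  have hpos := hT.connected.pos_dist_of_ne hwu
  rw [mem_sideSet, dist_comm (v := v)] at hw
  omega

end SideSet

lemma card_lt_card_of_forall_mem_edgeSet {G : SimpleGraph V} (hT : G.IsTree) {E : Finset (Sym2 V)}
    {U : Finset V} (hU : U.Nonempty) (hE : ∀ e ∈ E, e ∈ G.edgeSet)
    (hEU : ∀ e ∈ E, ∀ v ∈ e, v ∈ U) : #E < #U := by
  obtain ⟨ρ, hρ⟩ := hU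
  rw [← card_erase_add_one hρ, Nat.lt_succ_iff]
  -- Root the tree at `ρ` and send each edge to its endpoint farther from `ρ`.
  refine card_le_card_of_forall_subsingleton
    (fun e w => ∃ p, e = s(w, p) ∧ G.dist ρ w = G.dist ρ p + 1) (fun e he => ?_) ?_
  · induction e with | _ x y =>
    have ne_root {w p : V} (h : G.dist ρ w = G.dist ρ p + 1) : w ≠ ρ := by
      rintro rfl
      rw [dist_self] at h
      omega
    rcases hT.dist_eq_dist_add_one_of_adj ρ (hE _ he) with h | h
    · exact ⟨x, mem_erase.2 ⟨ne_root h, hEU _ he x (Sym2.mem_mk_left x y)⟩, y, rfl, h⟩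
    · exact ⟨y, mem_erase.2 ⟨ne_root h, hEU _ he y (Sym2.mem_mk_right x y)⟩, x, Sym2.eq_swap, h⟩
  · rintro w - _ ⟨he, p, rfl, hp⟩ _ ⟨he', p', rfl, hp'⟩
    exact congrArg (s(w, ·)) (eq_of_adj_of_dist_eq_add_one hT (hE _ he) (hE _ he') hp hp')

section HeavyEdges

variable [Fintype V] {G : SimpleGraph V} {k n : ℕ} {u v : V}

lemma mu_comm (G : SimpleGraph V) (u v : V) : mu G u v = mu G v u := min_comm _ _

lemma one_le_mu (h : G.Adj u v) : 1 ≤ mu G u v :=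
  le_min (card_pos.2 ⟨u, left_mem_sideSet h⟩) (card_pos.2 ⟨v, left_mem_sideSet h.symm⟩)

lemma mu_le_card_div_two (G : SimpleGraph V) (u v : V) : mu G u v ≤ Fintype.card V / 2 := by
  have h : side G u v + side G v u ≤ Fintype.card V := by
    rw [← card_sideSet, ← card_sideSet, ← card_union_of_disjoint disjoint_sideSet]
    exact card_le_univ _
  unfold mu
  omega

/-- The edges `e` with `k ≤ μ(e)`; their number is the `k`-th tail sum of the edge division
vector. -/
noncomputable def heavyEdges (G : SimpleGraph V) (k : ℕ) : Finset (Sym2 V) :=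
  {e | e ∈ G.edgeSet ∧ k ≤ muE G e}

lemma mk_mem_heavyEdges : s(u, v) ∈ heavyEdges G k ↔ G.Adj u v ∧ k ≤ mu G u v := by
  simp only [heavyEdges, mem_filter_univ, mem_edgeSet]
  rfl

lemma mem_edgeSet_of_mem_heavyEdges {e : Sym2 V} (he : e ∈ heavyEdges G k) : e ∈ G.edgeSet :=
  ((mem_filter_univ e).1 he).1

lemma heavyEdges_anti {l : ℕ} (h : k ≤ l) : heavyEdges G l ⊆ heavyEdges G k := by
  intro e
  simp only [heavyEdges, mem_filter_univ]
  exact And.imp_right h.trans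

lemma tailSum_eq_card_heavyEdges (hn : Fintype.card V ≤ n) : tailSum G n k = #(heavyEdges G k) := by
  rw [card_eq_sum_card_fiberwise (f := muE G) (t := Icc k (n / 2))]
  · refine sum_congr rfl fun i hi => ?_
    rw [heavyEdges, filter_filter, r]
    congr 1
    ext e
    simp only [mem_filter_univ]
    exact ⟨fun ⟨he, hi'⟩ => ⟨⟨he, hi' ▸ (mem_Icc.1 hi).1⟩, hi'⟩, fun ⟨⟨he, _⟩, hi'⟩ => ⟨he, hi'⟩⟩
  · intro e he
    obtain ⟨-, hk⟩ := (mem_filter_univ e).1 (mem_coe.1 he)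
    induction e with | _ u v =>
    exact mem_coe.2 (mem_Icc.2
      ⟨hk, (mu_le_card_div_two G u v).trans (Nat.div_le_div_right hn)⟩)

lemma card_le_card_heavyEdges_one_add_one (hG : G.Connected) :
    Fintype.card V ≤ #(heavyEdges G 1) + 1 := by
  have hE : (heavyEdges G 1 : Set (Sym2 V)) = G.edgeSet := by
    ext e
    induction e with | _ u v =>
    rw [mem_coe, mk_mem_heavyEdges, mem_edgeSet]
    exact and_iff_left_of_imp one_le_mu
  have := hG.card_vert_le_card_edgeSet_add_one
  rwa [← hE, Nat.card_eq_fintype_card, Nat.card_coe_set_eq, Set.ncard_coe_finset] at this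

lemma exists_minimal_side (hT : G.IsTree) (h : G.Adj u v) (hk : k ≤ mu G u v) :
    ∃ x y, G.Adj x y ∧ k ≤ side G x y ∧ sideSet G x y ⊆ sideSet G u v ∧
      ∀ e ∈ heavyEdges G k, ∀ w ∈ e, w ∈ sideSet G x y → w = x := by
  induction hm : side G u v using Nat.strong_induction_on generalizing u v with | _ m ih =>
  by_cases hmin : ∀ e ∈ heavyEdges G k, ∀ w ∈ e, w ∈ sideSet G u v → w = u
  · exact ⟨u, v, h, hk.trans (min_le_left _ _), Subset.rfl, hmin⟩
  push Not at hmin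
  obtain ⟨e, he, w, ⟨p, rfl⟩, hw, hwu⟩ := hmin
  rw [mk_mem_heavyEdges] at he
  obtain ⟨a, b, hab, hkab, ha, hu⟩ :
      ∃ a b, G.Adj a b ∧ k ≤ mu G a b ∧ a ∈ sideSet G u v ∧ u ∉ sideSet G a b := by
    by_cases hu : u ∈ sideSet G w p
    · have hp : p ∈ sideSet G u v := by
        by_contra hp
        exact hwu (eq_and_eq_of_adj_of_mem_sideSet hT h he.1 hw hp).1
      exact ⟨p, w, he.1.symm, mu_comm G w p ▸ he.2, hp, Finset.disjoint_left.1 disjoint_sideSet hu⟩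
    · exact ⟨w, p, he.1, he.2, hw, hu⟩
  have hlt := sideSet_ssubset hT h hab ha hu
  obtain ⟨x, y, hxy, hkxy, hsub, hmin⟩ := ih _ (hm ▸ card_lt_card hlt) hab hkab rfl
  exact ⟨x, y, hxy, hkxy, hsub.trans hlt.subset, hmin⟩

lemma card_heavyEdges_add_two_mul_le (hT : G.IsTree) (hk : 2 * k ≤ Fintype.card V + 1) :
    #(heavyEdges G k) + 2 * k ≤ Fintype.card V + 1 := by
  obtain hE | ⟨e, he⟩ := (heavyEdges G k).eq_empty_or_nonempty
  · rwa [hE, card_empty, zero_add]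
  induction e with | _ u v =>
  obtain ⟨huv, hmu⟩ := mk_mem_heavyEdges.1 he
  obtain ⟨x, y, hxy, hkx, hxu, hminx⟩ := exists_minimal_side hT huv hmu
  obtain ⟨x', y', hxy', hkx', hxv, hminx'⟩ :=
    exists_minimal_side hT huv.symm (mu_comm G u v ▸ hmu)
  have hx := left_mem_sideSet hxy
  have hx' := left_mem_sideSet hxy'
  have hdisj := disjoint_of_subset_left hxu (disjoint_of_subset_right hxv disjoint_sideSet)
  -- No heavy edge meets these two minimal sides outside `x` and `x'`.
  set L := (sideSet G x y).erase x ∪ (sideSet G x' y').erase x' with hL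
  have hcardL : #L + 2 = side G x y + side G x' y' := by
    rw [hL, card_union_of_disjoint (hdisj.mono (erase_subset _ _) (erase_subset _ _)),
      ← card_sideSet, ← card_sideSet, ← card_erase_add_one hx, ← card_erase_add_one hx']
    ring
  have hlt : #(heavyEdges G k) < #Lᶜ := by
    refine card_lt_card_of_forall_mem_edgeSet hT ⟨x, ?_⟩ (fun e => mem_edgeSet_of_mem_heavyEdges)
      fun e he w hw => ?_
    · simp [hL, Finset.disjoint_left.1 hdisj hx]
    · simp only [hL, mem_compl, mem_union, mem_erase]
      rintro (⟨hne, hwx⟩ | ⟨hne, hwx⟩)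
      · exact hne (hminx e he w hw hwx)
      · exact hne (hminx' e he w hw hwx)
  have := card_add_card_compl L
  omega

end HeavyEdges

section Pendent

variable [Fintype V] {G : SimpleGraph V} {k : ℕ} {u v x y : V}

/-- The set of pendent vertices of `G`. -/
noncomputable def pendentVertices (G : SimpleGraph V) : Finset V :=
  {v | deg G v = 1}

lemma mem_pendentVertices : v ∈ pendentVertices G ↔ deg G v = 1 :=
  mem_filter_univ v

lemma deg_eq_one_iff : deg G v = 1 ↔ ∃! w, G.Adj v w := by
  rw [deg, Fintype.existsUnique_iff_card_one]

lemma deg_ne_one_of_dist_add_dist (hG : G.Connected) (hvx : v ≠ x) (hvy : v ≠ y)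
    (h : G.dist x v + G.dist v y = G.dist x y) : deg G v ≠ 1 := by
  obtain ⟨p, hvp, hp⟩ := exists_adj_dist_eq_add_one hG hvx.symm
  obtain ⟨z, hvz, hz⟩ := exists_adj_dist_eq_add_one hG hvy.symm
  intro hv
  obtain rfl := (deg_eq_one_iff.1 hv).unique hvp hvz
  have := hG.dist_triangle (u := x) (v := p) (w := y)
  rw [dist_comm (u := y), dist_comm (u := y)] at hz
  omega

lemma mu_le_one_of_deg_eq_one (hG : G.Connected) (h : G.Adj u v) (hu : deg G u = 1) :
    mu G u v ≤ 1 := by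
  have hside : sideSet G u v = {u} := by
    refine sideSet_eq_of_forall_adj hG h (mem_singleton_self u)
      (notMem_singleton.2 h.ne') fun a b hab ha _ => ?_
    obtain rfl := mem_singleton.1 ha
    exact ⟨rfl, (deg_eq_one_iff.1 hu).unique hab h⟩
  calc mu G u v ≤ side G u v := min_le_left _ _
    _ = 1 := by rw [← card_sideSet, hside, card_singleton]

lemma card_heavyEdges_lt_card (hT : G.IsTree) : #(heavyEdges G k) < Fintype.card V := by
  have := hT.connected.nonempty
  exact card_lt_card_of_forall_mem_edgeSet hT univ_nonempty
    (fun e => mem_edgeSet_of_mem_heavyEdges) fun e _ w _ => mem_univ w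

lemma card_heavyEdges_add_card_pendentVertices_lt (hT : G.IsTree) (hk : 2 ≤ k)
    (hq : #(pendentVertices G) < Fintype.card V) :
    #(heavyEdges G k) + #(pendentVertices G) < Fintype.card V := by
  rw [← card_compl_add_card (pendentVertices G), add_lt_add_iff_right]
  refine card_lt_card_of_forall_mem_edgeSet hT ?_ (fun e => mem_edgeSet_of_mem_heavyEdges) ?_
  · rw [← card_pos, card_compl]
    omega
  · rintro e he w ⟨p, rfl⟩
    rw [mk_mem_heavyEdges] at he
    rw [mem_compl, mem_pendentVertices]
    exact fun hw => absurd (mu_le_one_of_deg_eq_one hT.connected he.1 hw) (by omega)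

end Pendent

section DoubleStar

variable {n a b k : ℕ} {x y : Fin n}

lemma doubleStar_adj : (doubleStar n a b).Adj x y ↔ x ≠ y ∧
    ((((x : ℕ) < a ∧ (y : ℕ) = a) ∨ (a ≤ (x : ℕ) ∧ (x : ℕ) + 1 = y ∧ (y : ℕ) < n - b) ∨
      ((x : ℕ) = n - b - 1 ∧ n - b ≤ (y : ℕ))) ∨
     (((y : ℕ) < a ∧ (x : ℕ) = a) ∨ (a ≤ (y : ℕ) ∧ (y : ℕ) + 1 = x ∧ (x : ℕ) < n - b) ∨
      ((y : ℕ) = n - b - 1 ∧ n - b ≤ (x : ℕ)))) :=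
  fromRel_adj _ _ _

lemma doubleStar_connected (hn : a + b < n) : (doubleStar n a b).Connected := by
  rw [connected_iff_exists_forall_reachable]
  refine ⟨⟨a, by omega⟩, fun ⟨x, hx⟩ => ?_⟩
  induction x using Nat.strong_induction_on with | _ x ih =>
  rcases lt_trichotomy x a with hxa | rfl | hxa
  · exact Adj.reachable (doubleStar_adj.2 (by grind))
  · rfl
  · have hparent : min (x - 1) (n - b - 1) < x := by omega
    refine (ih _ hparent (by omega)).trans (Adj.reachable (doubleStar_adj.2 ?_))
    rw [ne_eq, Fin.mk.injEq]
    dsimp only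
    omega

lemma mu_doubleStar (hx : a ≤ (x : ℕ)) (hxy : (x : ℕ) + 1 = y) (hy : (y : ℕ) < n - b) :
    mu (doubleStar n a b) x y = min ((x : ℕ) + 1) (n - y) := by
  have hG := doubleStar_connected (n := n) (a := a) (b := b) (by omega)
  have hadj : (doubleStar n a b).Adj x y := by
    rw [doubleStar_adj, ne_eq, Fin.ext_iff]
    omega
  have hcross : ∀ p q, (doubleStar n a b).Adj p q → p ≤ x → y ≤ q → p = x ∧ q = y := by
    intro p q hpq hp hq
    rw [doubleStar_adj] at hpq
    rw [Fin.le_def] at hp hq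
    rw [Fin.ext_iff, Fin.ext_iff]
    omega
  have hleft : sideSet (doubleStar n a b) x y = Iic x :=
    sideSet_eq_of_forall_adj hG hadj (mem_Iic.2 le_rfl) (by rw [mem_Iic]; omega)
      fun p q hpq hp hq => hcross p q hpq (mem_Iic.1 hp) (by rw [mem_Iic] at hq; omega)
  have hright : sideSet (doubleStar n a b) y x = Ici y :=
    sideSet_eq_of_forall_adj hG hadj.symm (mem_Ici.2 le_rfl) (by rw [mem_Ici]; omega)
      fun p q hpq hp hq => (hcross q p hpq.symm (by rw [mem_Ici] at hq; omega) (mem_Ici.1 hp)).symm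
  rw [mu, ← card_sideSet, ← card_sideSet, hleft, hright, Fin.card_Iic, Fin.card_Ici]

lemma min_le_card_heavyEdges_doubleStar (hab : a ≤ b) (hba : b ≤ a + 1) (hk : 1 ≤ k) :
    min (n - a - b - 1) (n + 1 - 2 * k) ≤ #(heavyEdges (doubleStar n a b) k) := by
  have hsurj : Set.SurjOn (fun e : Sym2 (Fin n) => (e.inf : ℕ)) (heavyEdges (doubleStar n a b) k)
      (Ico (max a (k - 1)) (min (n - b - 1) (n - k))) := by
    intro i hi
    rw [mem_coe, mem_Ico] at hi
    let x : Fin n := ⟨i, by omega⟩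
    let y : Fin n := ⟨i + 1, by omega⟩
    refine ⟨s(x, y), mem_coe.2 (mk_mem_heavyEdges.2 ⟨?_, ?_⟩), ?_⟩
    · rw [doubleStar_adj, ne_eq, Fin.ext_iff]
      dsimp only [x, y]
      omega
    · rw [mu_doubleStar] <;> dsimp only [x, y] <;> omega
    · exact congrArg Fin.val (inf_eq_left.2 (Fin.le_def.2 (Nat.le_succ i)))
  calc min (n - a - b - 1) (n + 1 - 2 * k)
      ≤ #(Ico (max a (k - 1)) (min (n - b - 1) (n - k))) := by rw [Nat.card_Ico]; omega
    _ ≤ _ := card_le_card_of_surjOn _ hsurj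

theorem preceq_doubleStar [Fintype V] {G : SimpleGraph V} (hT : G.IsTree) (hab : a ≤ b)
    (hba : b ≤ a + 1) (hq : #(pendentVertices G) = a + b) (hn : a + b < Fintype.card V) :
    Preceq (Fintype.card V) G (doubleStar (Fintype.card V) a b) := by
  intro k hk hkn
  rw [tailSum_eq_card_heavyEdges le_rfl, tailSum_eq_card_heavyEdges (Fintype.card_fin _).le]
  obtain rfl | hk2 := hk.eq_or_lt
  · have hG := card_heavyEdges_lt_card (k := 1) hT
    have hD := card_le_card_heavyEdges_one_add_one (doubleStar_connected hn)
    rw [Fintype.card_fin] at hD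
    omega
  · have hpendent := card_heavyEdges_add_card_pendentVertices_lt hT hk2 (by omega)
    have hcenter := card_heavyEdges_add_two_mul_le (k := k) hT (by omega)
    exact le_trans (by omega) (min_le_card_heavyEdges_doubleStar hab hba hk)

end DoubleStar

section Isomorphism

variable {G : SimpleGraph V} {H : SimpleGraph W}

lemma edist_map_le (f : G →g H) (u v : V) : H.edist (f u) (f v) ≤ G.edist u v :=
  le_iInf fun p => (edist_le (p.map f)).trans_eq (congrArg _ (p.length_map f))

lemma dist_iso (φ : G ≃g H) (u v : V) : H.dist (φ u) (φ v) = G.dist u v := by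
  refine congrArg ENat.toNat (le_antisymm (edist_map_le φ.toHom u v) ?_)
  simpa using edist_map_le φ.symm.toHom (φ u) (φ v)

lemma mu_iso [Fintype V] [Fintype W] (φ : G ≃g H) (u v : V) : mu H (φ u) (φ v) = mu G u v := by
  have side_iso (x y : V) : side H (φ x) (φ y) = side G x y :=
    (card_equiv φ.toEquiv fun w => by
      simp only [mem_filter_univ, RelIso.coe_fn_toEquiv, dist_iso]).symm
  rw [mu, mu, side_iso, side_iso]

lemma r_le_of_iso [Fintype V] [Fintype W] (φ : G ≃g H) (i : ℕ) : r G i ≤ r H i := by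
  refine card_le_card_of_injOn (Sym2.map φ) (fun e he => ?_)
    (Sym2.map.injective φ.injective).injOn
  rw [mem_coe, mem_filter_univ] at he ⊢
  induction e with | _ u v =>
  exact ⟨φ.map_adj_iff.2 he.1, (mu_iso φ u v).trans he.2⟩

lemma r_iso [Fintype V] [Fintype W] (φ : G ≃g H) (i : ℕ) : r G i = r H i :=
  (r_le_of_iso φ i).antisymm (r_le_of_iso φ.symm i)

lemma SameEdgeDivision.preceq [Fintype V] [Fintype W] {n : ℕ} (h : SameEdgeDivision n G H) :
    Preceq n H G := by
  intro k hk _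
  refine (sum_congr rfl fun i hi => ?_).le
  rw [mem_Icc] at hi
  exact (h i (hk.trans hi.1) hi.2).symm

lemma nonempty_iso_of_bijective_hom (hG : G.IsTree) (hH : H.Connected) (f : H →g G)
    (hf : Function.Bijective f) : Nonempty (G ≃g H) := by
  let e := Equiv.ofBijective f hf
  have hle : H.map e.toEmbedding ≤ G := by
    rw [map_le_iff_le_comap]
    exact fun u v huv => f.map_adj huv
  have heq : H.map e.toEmbedding = G :=
    (isTree_iff_minimal_connected.1 hG).eq_of_le
      ((Iso.map e H).connected_iff.1 hH) hle
  exact ⟨(heq ▸ Iso.map e H).symm⟩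

lemma exists_enumeration [Nonempty V] (S : Finset V) :
    ∃ f : ℕ → V, (∀ i < #S, f i ∈ S) ∧ ∀ v ∈ S, ∃ i < #S, f i = v := by
  refine ⟨fun i => S.toList.getD i (Classical.arbitrary V), fun i hi => ?_, fun v hv => ?_⟩
  · rw [← length_toList] at hi
    simpa only [List.getD_eq_getElem _ _ hi, ← mem_toList] using List.getElem_mem hi
  · obtain ⟨i, hi, rfl⟩ := List.mem_iff_getElem.1 (mem_toList.2 hv)
    exact ⟨i, by rwa [← length_toList], List.getD_eq_getElem _ _ hi⟩

lemma nonempty_iso_doubleStar_of_labelling [Fintype V] (hG : G.IsTree) {a b : ℕ}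
    (hab : a + b < Fintype.card V) (f : ℕ → V) (hsurj : ∀ v, ∃ i < Fintype.card V, f i = v)
    (hleft : ∀ i < a, G.Adj (f i) (f a))
    (hpath : ∀ i, a ≤ i → i + 1 < Fintype.card V - b → G.Adj (f i) (f (i + 1)))
    (hright : ∀ i, Fintype.card V - b ≤ i → i < Fintype.card V →
      G.Adj (f (Fintype.card V - b - 1)) (f i)) :
    Nonempty (G ≃g doubleStar (Fintype.card V) a b) := by
  have hadj : ∀ x y : Fin (Fintype.card V), ((x : ℕ) < a ∧ (y : ℕ) = a) ∨
      (a ≤ (x : ℕ) ∧ (x : ℕ) + 1 = y ∧ (y : ℕ) < Fintype.card V - b) ∨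
      ((x : ℕ) = Fintype.card V - b - 1 ∧ Fintype.card V - b ≤ (y : ℕ)) →
      G.Adj (f x) (f y) := by
    rintro x y (⟨hx, hy⟩ | ⟨hx, hxy, hy⟩ | ⟨hx, hy⟩)
    · exact hy ▸ hleft x hx
    · exact hxy ▸ hpath x hx (hxy ▸ hy)
    · exact hx ▸ hright y hy y.isLt
  refine nonempty_iso_of_bijective_hom hG (doubleStar_connected hab)
    ⟨fun x => f x, fun {x y} hxy =>
      (doubleStar_adj.1 hxy).2.elim (hadj x y) fun h => (hadj y x h).symm⟩
    ((Fintype.bijective_iff_surjective_and_card _).2 ⟨fun v => ?_, Fintype.card_fin _⟩)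
  obtain ⟨i, hi, hv⟩ := hsurj v
  exact ⟨⟨i, hi⟩, hv⟩

lemma nonempty_iso_doubleStar_of_walk [Fintype V] (hG : G.IsTree) {s t : V} (p : G.Walk s t)
    {A B : Finset V} (hA : ∀ v ∈ A, G.Adj s v) (hB : ∀ v ∈ B, G.Adj t v)
    (hcover : ∀ v, v ∈ A ∨ v ∈ p.support ∨ v ∈ B)
    (hcard : #A + (p.length + 1) + #B = Fintype.card V) :
    Nonempty (G ≃g doubleStar (Fintype.card V) #A #B) := by
  have := hG.connected.nonempty
  obtain ⟨α, hαA, hα⟩ := exists_enumeration A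
  obtain ⟨β, hβB, hβ⟩ := exists_enumeration B
  let f (i : ℕ) : V :=
    if i < #A then α i
    else if i ≤ #A + p.length then p.getVert (i - #A)
    else β (i - (#A + p.length + 1))
  have f_left {i : ℕ} (hi : i < #A) : f i = α i := if_pos hi
  have f_path {i : ℕ} (hi : i ≤ p.length) : f (#A + i) = p.getVert i := by
    simp only [f]
    rw [if_neg (by omega), if_pos (by omega), Nat.add_sub_cancel_left]
  have f_right (i : ℕ) : f (#A + p.length + 1 + i) = β i := by
    simp only [f]
    rw [if_neg (by omega), if_neg (by omega), Nat.add_sub_cancel_left]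
  refine nonempty_iso_doubleStar_of_labelling hG (by omega) f (fun v => ?_) (fun i hi => ?_)
    (fun i hAi hi => ?_) fun i hBi hi => ?_
  · rcases hcover v with hv | hv | hv
    · obtain ⟨i, hi, rfl⟩ := hα v hv
      exact ⟨i, by omega, f_left hi⟩
    · obtain ⟨i, rfl, hi⟩ := Walk.mem_support_iff_exists_getVert.1 hv
      exact ⟨#A + i, by omega, f_path hi⟩
    · obtain ⟨i, hi, rfl⟩ := hβ v hv
      exact ⟨#A + p.length + 1 + i, by omega, f_right i⟩
  · rw [f_left hi, show f #A = p.getVert 0 from f_path (Nat.zero_le _), p.getVert_zero]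
    exact (hA _ (hαA i hi)).symm
  · obtain ⟨j, rfl⟩ := Nat.exists_eq_add_of_le hAi
    rw [f_path (by omega), add_assoc, f_path (by omega)]
    exact p.adj_getVert_succ (by omega)
  · obtain ⟨j, rfl⟩ := Nat.exists_eq_add_of_le (show #A + p.length + 1 ≤ i by omega)
    rw [show Fintype.card V - #B - 1 = #A + p.length by omega, f_path le_rfl, f_right,
      p.getVert_length]
    exact hB _ (hβB j (by omega))

end Isomorphism

section StarEnd

variable [Fintype V] {G : SimpleGraph V} {s s' t w z : V} {k : ℕ}

/-- The pendent vertices attached to `s`. -/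
noncomputable def pendentNeighbors (G : SimpleGraph V) (s : V) : Finset V :=
  {z | G.Adj s z ∧ deg G z = 1}

lemma mem_pendentNeighbors : z ∈ pendentNeighbors G s ↔ G.Adj s z ∧ deg G z = 1 :=
  mem_filter_univ z

lemma pendentNeighbors_subset : pendentNeighbors G s ⊆ pendentVertices G :=
  fun _ hz => mem_pendentVertices.2 (mem_pendentNeighbors.1 hz).2

lemma disjoint_pendentNeighbors (hst : s ≠ t) :
    Disjoint (pendentNeighbors G s) (pendentNeighbors G t) := by
  rw [Finset.disjoint_left]
  intro z hs ht
  rw [mem_pendentNeighbors] at hs ht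
  exact hst ((deg_eq_one_iff.1 hs.2).unique hs.1.symm ht.1.symm)

lemma card_pendentNeighbors_add_le (hst : s ≠ t) :
    #(pendentNeighbors G s) + #(pendentNeighbors G t) ≤ #(pendentVertices G) := by
  rw [← card_union_of_disjoint (disjoint_pendentNeighbors hst)]
  exact card_le_card (union_subset pendentNeighbors_subset pendentNeighbors_subset)

lemma dist_eq_dist_add_one_of_mem_pendentNeighbors (hG : G.Connected)
    (hz : z ∈ pendentNeighbors G t) (hw : w ≠ z) : G.dist w z = G.dist w t + 1 := by
  rw [mem_pendentNeighbors] at hz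
  obtain ⟨p, hzp, hp⟩ := exists_adj_dist_eq_add_one hG hw
  rwa [(deg_eq_one_iff.1 hz.2).unique hzp hz.1.symm] at hp

lemma exists_deg_eq_one_dist_add_dist_eq (hT : G.IsTree) (hws : w ≠ s) :
    ∃ z, deg G z = 1 ∧ G.dist s w + G.dist w z = G.dist s z := by
  have hne : ({z | G.dist s w + G.dist w z = G.dist s z} : Finset V).Nonempty :=
    ⟨w, by rw [mem_filter_univ, dist_self, add_zero]⟩
  obtain ⟨z, hz, hmax⟩ := exists_max_image _ (G.dist s) hne
  simp only [mem_filter_univ] at hz hmax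
  have hpos := hT.connected.pos_dist_of_ne hws.symm
  obtain ⟨p, hzp, hp⟩ := exists_adj_dist_eq_add_one hT.connected (v := s) (w := z)
    (by rintro rfl; rw [dist_self] at hz; omega)
  refine ⟨z, deg_eq_one_iff.2 ⟨p, hzp, fun y hzy => ?_⟩, hz⟩
  rcases hT.dist_eq_dist_add_one_of_adj s hzy with hy | hy
  · exact eq_of_adj_of_dist_eq_add_one hT hzy hzp hy hp
  · have hwy := hT.dist_eq_dist_add_one_of_adj w hzy
    have htri := hT.connected.dist_triangle (u := s) (v := w) (w := y)
    have := hmax y (by omega)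
    omega

lemma dist_add_dist_eq_of_pendentVertices_subset (hT : G.IsTree)
    (hst : pendentVertices G ⊆ pendentNeighbors G s ∪ pendentNeighbors G t)
    (hw : deg G w ≠ 1) : G.dist s w + G.dist w t = G.dist s t := by
  obtain rfl | hws := eq_or_ne w s
  · rw [dist_self, zero_add]
  obtain ⟨z, hz, hdist⟩ := exists_deg_eq_one_dist_add_dist_eq hT hws
  have hwz : w ≠ z := fun h => hw (h ▸ hz)
  have hsw := hT.connected.pos_dist_of_ne hws.symm
  have hsz : s ≠ z := by
    rintro rfl
    rw [dist_self] at hdist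
    omega
  rcases mem_union.1 (hst (mem_pendentVertices.2 hz)) with h | h
  · have := hT.connected.pos_dist_of_ne hwz
    have := dist_eq_one_iff_adj.2 (mem_pendentNeighbors.1 h).1
    omega
  · have := dist_eq_dist_add_one_of_mem_pendentNeighbors hT.connected h hwz
    have := dist_eq_dist_add_one_of_mem_pendentNeighbors hT.connected h hsz
    omega

lemma nonempty_iso_doubleStar_of_union_eq (hT : G.IsTree) (hst : s ≠ t)
    (hs : deg G s ≠ 1) (ht : deg G t ≠ 1)
    (hunion : pendentNeighbors G s ∪ pendentNeighbors G t = pendentVertices G) :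
    Nonempty (G ≃g
      doubleStar (Fintype.card V) #(pendentNeighbors G s) #(pendentNeighbors G t)) := by
  obtain ⟨p, hp, -⟩ := hT.connected.exists_path_of_dist s t
  have hsupport : ∀ v, v ∈ p.support ↔ deg G v ≠ 1 := by
    intro v
    rw [mem_support_iff_dist_add_dist_eq hT hp]
    refine ⟨fun h => ?_, dist_add_dist_eq_of_pendentVertices_subset hT hunion.ge⟩
    obtain rfl | hvs := eq_or_ne v s
    · exact hs
    obtain rfl | hvt := eq_or_ne v t
    · exact ht
    exact deg_ne_one_of_dist_add_dist hT.connected hvs hvt h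
  have hlength : p.length + 1 = #(pendentVertices G)ᶜ := by
    rw [← p.length_support, ← List.toFinset_card_of_nodup hp.support_nodup]
    congr 1
    ext v
    rw [List.mem_toFinset, mem_compl, mem_pendentVertices, hsupport]
  refine nonempty_iso_doubleStar_of_walk hT p (fun v hv => (mem_pendentNeighbors.1 hv).1)
    (fun v hv => (mem_pendentNeighbors.1 hv).1) (fun v => ?_) ?_
  · by_cases hv : deg G v = 1
    · exact (mem_union.1 (hunion.ge (mem_pendentVertices.2 hv))).imp_right Or.inr
    · exact Or.inr (Or.inl ((hsupport v).2 hv))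
  · rw [hlength, add_right_comm, ← card_union_of_disjoint (disjoint_pendentNeighbors hst), hunion,
      card_add_card_compl]

/-- `s` is the center of a star at an end of `G`: a non-pendent vertex all of whose neighbors are
pendent except `s'`. -/
structure IsStarEnd (G : SimpleGraph V) (s s' : V) : Prop where
  adj : G.Adj s s'
  deg_ne_one : deg G s ≠ 1
  deg_eq_one_iff : ∀ z, G.Adj s z → (deg G z = 1 ↔ z ≠ s')

lemma exists_isStarEnd_ne (hT : G.IsTree) {c c' : V} (hc : deg G c ≠ 1) (hc' : deg G c' ≠ 1)
    (hcc' : c ≠ c') : ∃ s s', IsStarEnd G s s' ∧ s ≠ c := by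
  obtain ⟨s, hs, hmax⟩ := exists_max_image {v | deg G v ≠ 1} (G.dist c) ⟨c, by simpa using hc⟩
  simp only [mem_filter_univ] at hs hmax
  have hcs : c ≠ s := by
    rintro rfl
    have := (hmax c' hc').trans_eq dist_self
    have := hT.connected.pos_dist_of_ne hcc'
    omega
  obtain ⟨s', hss', hdist⟩ := exists_adj_dist_eq_add_one hT.connected hcs
  have hs' : deg G s' ≠ 1 := by
    obtain rfl | hne := eq_or_ne s' c
    · exact hc
    · exact deg_ne_one_of_dist_add_dist hT.connected hne hss'.ne'
        (by rw [hdist, dist_eq_one_iff_adj.2 hss'.symm])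
  refine ⟨s, s', ⟨hss', hs, fun z hsz => ⟨?_, fun hzs' => by_contra fun hz => ?_⟩⟩, hcs.symm⟩
  · rintro hz rfl
    exact hs' hz
  · have hle := hmax z hz
    rcases hT.dist_eq_dist_add_one_of_adj c hsz with h | h
    · exact hzs' (eq_of_adj_of_dist_eq_add_one hT hsz hss' h hdist)
    · omega

namespace IsStarEnd

lemma card_pendentNeighbors_pos (h : IsStarEnd G s s') : 0 < #(pendentNeighbors G s) := by
  obtain ⟨z, hsz, hzs'⟩ : ∃ z, G.Adj s z ∧ z ≠ s' := by
    by_contra! hall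
    exact h.deg_ne_one (TreeOrder.deg_eq_one_iff.2 ⟨s', h.adj, hall⟩)
  exact card_pos.2 ⟨z, mem_pendentNeighbors.2 ⟨hsz, (h.deg_eq_one_iff z hsz).2 hzs'⟩⟩

lemma side_eq (h : IsStarEnd G s s') (hG : G.Connected) :
    side G s s' = #(pendentNeighbors G s) + 1 := by
  have hs : s ∉ pendentNeighbors G s := fun hs => (mem_pendentNeighbors.1 hs).1.ne rfl
  have hs' : s' ∉ pendentNeighbors G s := fun hs' =>
    (h.deg_eq_one_iff s' h.adj).1 (mem_pendentNeighbors.1 hs').2 rfl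
  rw [← card_sideSet, ← card_insert_of_notMem hs]
  refine congrArg card (sideSet_eq_of_forall_adj hG h.adj (mem_insert_self _ _) ?_ ?_)
  · exact fun hmem => (mem_insert.1 hmem).elim h.adj.ne' hs'
  · intro x y hxy hx hy
    obtain ⟨hys, hy⟩ := not_or.1 (mem_insert.not.1 hy)
    rcases mem_insert.1 hx with rfl | hx
    · refine ⟨rfl, by_contra fun hne => hy ?_⟩
      exact mem_pendentNeighbors.2 ⟨hxy, (h.deg_eq_one_iff y hxy).2 hne⟩
    · rw [mem_pendentNeighbors] at hx
      exact absurd ((TreeOrder.deg_eq_one_iff.1 hx.2).unique hxy hx.1.symm) hys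

lemma mk_mem_heavyEdges (h : IsStarEnd G s s') (hT : G.IsTree) :
    s(s, s') ∈ heavyEdges G k ↔
      k ≤ #(pendentNeighbors G s) + 1 ∧ k + #(pendentNeighbors G s) + 1 ≤ Fintype.card V := by
  have hside := h.side_eq hT.connected
  have hsum := side_add_side hT h.adj
  rw [TreeOrder.mk_mem_heavyEdges, mu, le_min_iff, and_iff_right h.adj]
  omega

end IsStarEnd

end StarEnd

section Extremal

variable [Fintype V] {G : SimpleGraph V} {s s' t t' : V} {a b k : ℕ}

lemma min_le_card_heavyEdges_of_preceq (hab : a ≤ b) (hba : b ≤ a + 1)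
    (h : Preceq (Fintype.card V) (doubleStar (Fintype.card V) a b) G) (hk : 1 ≤ k) :
    min (Fintype.card V - a - b - 1) (Fintype.card V + 1 - 2 * k) ≤ #(heavyEdges G k) := by
  obtain hkn | hkn := lt_or_ge (Fintype.card V / 2) k
  · exact (show _ = 0 by omega).trans_le (Nat.zero_le _)
  have hle := h k hk hkn
  rw [tailSum_eq_card_heavyEdges le_rfl, tailSum_eq_card_heavyEdges (Fintype.card_fin _).le] at hle
  exact (min_le_card_heavyEdges_doubleStar hab hba hk).trans hle

lemma IsStarEnd.le_card_pendentNeighbors_of_preceq (hT : G.IsTree) (hs : IsStarEnd G s s')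
    (hab : a ≤ b) (hba : b ≤ a + 1) (hn : a + b + 2 ≤ Fintype.card V)
    (hq : #(pendentVertices G) = a + b) (hsq : #(pendentNeighbors G s) < a + b)
    (h : Preceq (Fintype.card V) (doubleStar (Fintype.card V) a b) G) :
    a ≤ #(pendentNeighbors G s) := by
  obtain rfl | ha := a.eq_zero_or_pos
  · exact Nat.zero_le _
  have hlower := min_le_card_heavyEdges_of_preceq hab hba h (k := a + 1) (by omega)
  have hupper := card_heavyEdges_add_card_pendentVertices_lt hT le_rfl (by omega)
  have heq : heavyEdges G (a + 1) = heavyEdges G 2 :=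
    eq_of_subset_of_card_le (heavyEdges_anti (by omega)) (by omega)
  have hpos := hs.card_pendentNeighbors_pos
  have hmem : s(s, s') ∈ heavyEdges G (a + 1) := by
    rw [heq, hs.mk_mem_heavyEdges hT]
    omega
  rw [hs.mk_mem_heavyEdges hT] at hmem
  omega

lemma IsStarEnd.card_pendentNeighbors_ne_of_preceq (hT : G.IsTree) (hs : IsStarEnd G s s')
    (ht : IsStarEnd G t t') (hst : s ≠ t) (hn : 2 * a + 3 ≤ Fintype.card V)
    (hq : #(pendentVertices G) = 2 * a + 1)
    (h : Preceq (Fintype.card V) (doubleStar (Fintype.card V) a (a + 1)) G)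
    (hsa : #(pendentNeighbors G s) = a) : #(pendentNeighbors G t) ≠ a := by
  intro hta
  have ha : 0 < a := hsa ▸ hs.card_pendentNeighbors_pos
  have hne : s(s, s') ≠ s(t, t') := by
    intro heq
    obtain ⟨rfl, rfl⟩ | ⟨rfl, rfl⟩ := Sym2.eq_iff.1 heq
    · exact hst rfl
    · have := side_add_side hT hs.adj
      rw [hs.side_eq hT.connected, ht.side_eq hT.connected] at this
      omega
  have hlower := min_le_card_heavyEdges_of_preceq a.le_succ le_rfl h (k := a + 2) (by omega)
  have hupper := card_heavyEdges_add_card_pendentVertices_lt hT le_rfl (by omega)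
  have hpair : ({s(s, s'), s(t, t')} : Finset (Sym2 V)) ⊆
      heavyEdges G 2 \ heavyEdges G (a + 2) := by
    simp only [insert_subset_iff, singleton_subset_iff, mem_sdiff, hs.mk_mem_heavyEdges hT,
      ht.mk_mem_heavyEdges hT]
    omega
  have htwo := card_le_card hpair
  rw [card_pair hne, card_sdiff_of_subset (heavyEdges_anti (Nat.le_add_left 2 a))] at htwo
  omega

theorem nonempty_iso_doubleStar_of_preceq (hT : G.IsTree) (hab : a ≤ b) (hba : b ≤ a + 1)
    (hn : a + b + 2 ≤ Fintype.card V) (hq : #(pendentVertices G) = a + b)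
    (h : Preceq (Fintype.card V) (doubleStar (Fintype.card V) a b) G) :
    Nonempty (G ≃g doubleStar (Fintype.card V) a b) := by
  obtain ⟨c, hc, c', hc', hcc'⟩ : ∃ c ∈ (pendentVertices G)ᶜ, ∃ c' ∈ (pendentVertices G)ᶜ, c ≠ c' :=
    one_lt_card.1 (by rw [card_compl]; omega)
  rw [mem_compl, mem_pendentVertices] at hc hc'
  obtain ⟨s, s', hs, -⟩ := exists_isStarEnd_ne hT hc hc' hcc'
  obtain ⟨t, t', ht, hts⟩ : ∃ t t', IsStarEnd G t t' ∧ t ≠ s := by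
    by_cases hsc : s = c
    · exact exists_isStarEnd_ne hT hs.deg_ne_one hc' (hsc ▸ hcc')
    · exact exists_isStarEnd_ne hT hs.deg_ne_one hc hsc
  have hst := hts.symm
  have hsum := card_pendentNeighbors_add_le hst (G := G)
  have hspos := hs.card_pendentNeighbors_pos
  have htpos := ht.card_pendentNeighbors_pos
  have has := hs.le_card_pendentNeighbors_of_preceq hT hab hba hn hq (by omega) h
  have hat := ht.le_card_pendentNeighbors_of_preceq hT hab hba hn hq (by omega) h
  have hcases : #(pendentNeighbors G s) = a ∧ #(pendentNeighbors G t) = b ∨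
      #(pendentNeighbors G t) = a ∧ #(pendentNeighbors G s) = b := by
    obtain rfl | rfl : b = a ∨ b = a + 1 := by omega
    · omega
    · have := hs.card_pendentNeighbors_ne_of_preceq hT ht hst (by omega) (by omega) h
      omega
  have hunion : pendentNeighbors G s ∪ pendentNeighbors G t = pendentVertices G := by
    refine eq_of_subset_of_card_le (union_subset pendentNeighbors_subset pendentNeighbors_subset) ?_
    rw [card_union_of_disjoint (disjoint_pendentNeighbors hst)]
    omega
  rcases hcases with ⟨hsa, htb⟩ | ⟨hta, hsb⟩
  · simpa only [hsa, htb] using nonempty_iso_doubleStar_of_union_eq hT hst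
      hs.deg_ne_one ht.deg_ne_one hunion
  · simpa only [hta, hsb] using nonempty_iso_doubleStar_of_union_eq hT hts
      ht.deg_ne_one hs.deg_ne_one ((union_comm _ _).trans hunion)

end Extremal

end

/-- Let `T` be a tree on `n` vertices with exactly `q` pendent vertices,
`2 < q < n − 1`. Then `T ⪯ CP_{n;⌊q/2⌋,⌈q/2⌉}`, and `r(T) = r(CP_{n;⌊q/2⌋,⌈q/2⌉})` iff
`T` is isomorphic to `CP_{n;⌊q/2⌋,⌈q/2⌉}`. -/
theorem stmt16 {V : Type*} [Fintype V] (G : SimpleGraph V) (hT : G.IsTree) (q : ℕ)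
    (hq : (Finset.univ.filter fun v => deg G v = 1).card = q)
    (hq2 : 2 < q) (hqn : q < Fintype.card V - 1) :
    Preceq (Fintype.card V) G (doubleStar (Fintype.card V) (q / 2) ((q + 1) / 2)) ∧
    (SameEdgeDivision (Fintype.card V) G
        (doubleStar (Fintype.card V) (q / 2) ((q + 1) / 2)) ↔
      Nonempty (G ≃g doubleStar (Fintype.card V) (q / 2) ((q + 1) / 2))) := by
  have hsum : q / 2 + (q + 1) / 2 = q := by omega
  have hqG : (pendentVertices G).card = q / 2 + (q + 1) / 2 := hq.trans hsum.symm
  exact ⟨preceq_doubleStar hT (by omega) (by omega) hqG (by omega),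
    fun h => nonempty_iso_doubleStar_of_preceq hT (by omega) (by omega) (by omega) hqG h.preceq,
    fun ⟨φ⟩ i _ _ => r_iso φ i⟩

end TreeOrder
end
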